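/- Let α = ℓ c̄^{m1} c^{m2} ∈ D (so 1 + m1 + m2 ≤ 2^(2^n)). If γ = ℓ c^{r1} c̄^{r2} for some r1, r2 ∈ ℕ and α + γ ∈ ⟨𝓕⟩, then γ = α; that is, the set of monomials γ with α + γ ∈ ⟨𝓕⟩ meets {ℓ c^{r1} c̄^{r2} : r1, r2 ∈ ℕ} exactly in {α}. -/

import Mathlib

open MvPolynomial

/-- Monomials in the variables `σ`, represented by their exponent vectors. -/
abbrev Mon (σ : Type*) := σ →₀ ℕ

/-- A monomial order: a total order on monomials such that `1 ≼ t` for every monomial `t`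
and `t ≼ u → t·v ≼ u·v` (written additively on exponent vectors). -/
structure MonOrd (σ : Type*) where
  le : Mon σ → Mon σ → Prop
  le_refl : ∀ t, le t t
  le_trans : ∀ t u v, le t u → le u v → le t v
  le_antisymm : ∀ t u, le t u → le u t → t = u
  le_total : ∀ t u, le t u ∨ le u t
  zero_le : ∀ t, le 0 t
  add_le_add : ∀ t u v, le t u → le (t + v) (u + v)

/-- Strict version of a monomial order. -/
def MonOrd.lt {σ : Type*} (μ : MonOrd σ) (t u : Mon σ) : Prop := μ.le t u ∧ t ≠ u

/-- The extension of a monomial order (given by the relation `r` on monomials) to polynomials: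
`g ≼ f` iff `g = f` or the greatest monomial on which `f` and `g` differ occurs in `f`.
(This is the closed form of the recursive definition: `g ≼ f` iff `g = f`, or
`HT g ≺ HT f`, or `HT g = HT f` and `g - HT g ≼ f - HT f`, with `0` the least polynomial.) -/
def polyLe {σ : Type*} (r : Mon σ → Mon σ → Prop) (g f : MvPolynomial σ (ZMod 2)) : Prop :=
  g = f ∨ ∃ t, t ∈ f.support ∧ t ∉ g.support ∧
    ∀ u : Mon σ, ((u ∈ f.support ∧ u ∉ g.support) ∨ (u ∈ g.support ∧ u ∉ f.support)) → r u t

/-- Strict extension of a monomial order to polynomials. -/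
def polyLt {σ : Type*} (r : Mon σ → Mon σ → Prop) (g f : MvPolynomial σ (ZMod 2)) : Prop :=
  polyLe r g f ∧ g ≠ f

/-- `S_F`: the set of non-residual polynomials with respect to `F` and the monomial order `r`,
i.e. those `f` admitting a `g` with `f + g ∈ ⟨F⟩` and `g ≺ f`. -/
def SF {σ : Type*} (r : Mon σ → Mon σ → Prop) (F : Set (MvPolynomial σ (ZMod 2))) :
    Set (MvPolynomial σ (ZMod 2)) :=
  {f | ∃ g, f + g ∈ Ideal.span F ∧ polyLt r g f}

/-- `t` is the head monomial (`r`-greatest monomial) of the polynomial `f`. -/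
def IsHT {σ : Type*} (r : Mon σ → Mon σ → Prop) (f : MvPolynomial σ (ZMod 2)) (t : Mon σ) :
    Prop :=
  t ∈ f.support ∧ ∀ u ∈ f.support, r u t

/-- `HT(S)`: the set of head monomials (as polynomials) of the nonzero elements of `S`. -/
def HTset {σ : Type*} (r : Mon σ → Mon σ → Prop) (S : Set (MvPolynomial σ (ZMod 2))) :
    Set (MvPolynomial σ (ZMod 2)) :=
  {p | ∃ f ∈ S, f ≠ 0 ∧ ∃ t, IsHT r f t ∧ p = monomial t 1}

/-- The divisibility (componentwise) order `◁` on monomials. -/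
def triMon {σ : Type*} (t u : Mon σ) : Prop := ∀ x, t x ≤ u x

/-- The order `◁` on polynomials: `p ◁ q` iff there is an injective map `φ` from the
monomials of `p` to the monomials of `q` with `t ◁ φ t` for each monomial `t` of `p`. -/
def triPoly {σ : Type*} (p q : MvPolynomial σ (ZMod 2)) : Prop :=
  ∃ φ : Mon σ → Mon σ, Set.InjOn φ ↑p.support ∧ ∀ t ∈ p.support, φ t ∈ q.support ∧ triMon t (φ t)

/-- Upward closure with respect to `◁`. -/
def upClo {σ : Type*} (A : Set (MvPolynomial σ (ZMod 2))) : Set (MvPolynomial σ (ZMod 2)) :=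
  {q | ∃ p ∈ A, triPoly p q}

/-- `Min_◁(A)`: the `◁`-minimal elements of `A`. -/
def minTri {σ : Type*} (A : Set (MvPolynomial σ (ZMod 2))) : Set (MvPolynomial σ (ZMod 2)) :=
  {p | p ∈ A ∧ ∀ q ∈ A, triPoly q p → q = p}

/-- `G` is a Gröbner basis of the ideal `I` with respect to the monomial order `r`. -/
def IsGB {σ : Type*} (r : Mon σ → Mon σ → Prop) (G : Finset (MvPolynomial σ (ZMod 2)))
    (I : Ideal (MvPolynomial σ (ZMod 2))) : Prop :=
  (↑G : Set (MvPolynomial σ (ZMod 2))) ⊆ ↑I ∧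
    Ideal.span (↑G : Set (MvPolynomial σ (ZMod 2))) = I ∧
    Ideal.span (HTset r (↑I : Set (MvPolynomial σ (ZMod 2)))) = Ideal.span (HTset r ↑G)

/-- `G` is a reduced Gröbner basis of `I` with respect to `r`. -/
def IsReducedGB {σ : Type*} (r : Mon σ → Mon σ → Prop) (G : Finset (MvPolynomial σ (ZMod 2)))
    (I : Ideal (MvPolynomial σ (ZMod 2))) : Prop :=
  IsGB r G I ∧ ∀ f ∈ G, ¬ ∀ t ∈ f.support,
    (monomial t 1 : MvPolynomial σ (ZMod 2)) ∈
      Ideal.span (HTset r ((↑G : Set (MvPolynomial σ (ZMod 2))) \ {f}))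

/-- The variable set `X`: the special variables `s, ℓ, c, c̄, b, b̄` together with, for each
`0 ≤ i ≤ n`, the variables `s_i, f_i, q_{ji}, c_{ji}, b_{ji}` (`1 ≤ j ≤ 4`, encoded by
`j : Fin 4`) and their barred copies (`bar = true`). -/
inductive MVar (n : ℕ) : Type where
  | vs | vl | vc | vcb | vb | vbb
  | vS (bar : Bool) (i : Fin (n+1))
  | vF (bar : Bool) (i : Fin (n+1))
  | vQ (bar : Bool) (j : Fin 4) (i : Fin (n+1))
  | vC (bar : Bool) (j : Fin 4) (i : Fin (n+1))
  | vB (bar : Bool) (j : Fin 4) (i : Fin (n+1))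
deriving DecidableEq

open MVar

abbrev MPoly (n : ℕ) := MvPolynomial (MVar n) (ZMod 2)

/-- `e(n) = 2^(2^n)`. -/
def en (n : ℕ) : ℕ := 2 ^ 2 ^ n

/-- The set `P_0` (barred copy if `bar = true`). -/
def P0 (n : ℕ) (bar : Bool) : Set (MPoly n) :=
  {p | ∃ j : Fin 4, p =
    X (vB bar j 0) ^ 2 * X (vC bar j 0) * X (vF bar 0) + X (vC bar j 0) * X (vS bar 0)}

/-- The set `P_m` for `m = i+1`, `i : Fin n` (barred copy if `bar = true`).
Here `i.succ` plays the role of `m` and `i.castSucc` the role of `m-1`; the indices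
`1,2,3,4` of the paper are encoded as `0,1,2,3 : Fin 4`. -/
def Pm (n : ℕ) (bar : Bool) (i : Fin n) : Set (MPoly n) :=
  ({ X (vQ bar 0 i.succ) * X (vC bar 0 i.castSucc) * X (vS bar i.castSucc) + X (vS bar i.succ),
    X (vQ bar 1 i.succ) * X (vC bar 1 i.castSucc) * X (vS bar i.castSucc)
      + X (vQ bar 0 i.succ) * X (vB bar 0 i.castSucc) * X (vC bar 0 i.castSucc)
        * X (vF bar i.castSucc),
    X (vQ bar 2 i.succ) * X (vC bar 2 i.castSucc) * X (vF bar i.castSucc)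
      + X (vQ bar 1 i.succ) * X (vC bar 1 i.castSucc) * X (vF bar i.castSucc),
    X (vQ bar 2 i.succ) * X (vB bar 0 i.castSucc) * X (vC bar 2 i.castSucc)
        * X (vS bar i.castSucc)
      + X (vQ bar 1 i.succ) * X (vB bar 3 i.castSucc) * X (vC bar 1 i.castSucc)
        * X (vS bar i.castSucc),
    X (vQ bar 3 i.succ) * X (vB bar 3 i.castSucc) * X (vC bar 3 i.castSucc)
        * X (vF bar i.castSucc)
      + X (vQ bar 2 i.succ) * X (vC bar 2 i.castSucc) * X (vS bar i.castSucc),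
    X (vQ bar 3 i.succ) * X (vC bar 3 i.castSucc) * X (vS bar i.castSucc)
      + X (vF bar i.succ) } : Set (MPoly n))
  ∪ {p | ∃ j : Fin 4, p =
      X (vQ bar 1 i.succ) * X (vB bar 2 i.castSucc) * X (vB bar j i.succ) * X (vC bar j i.succ)
          * X (vF bar i.castSucc)
        + X (vQ bar 1 i.succ) * X (vB bar 1 i.castSucc) * X (vC bar j i.succ)
          * X (vF bar i.castSucc)}

/-- The set `P = P_0 ∪ P_1 ∪ ⋯ ∪ P_n`; for `bar = true` this is the barred copy `P̄`
(the image of `P` under the substitution replacing each variable by its barred version). -/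
def PP (n : ℕ) (bar : Bool) : Set (MPoly n) := P0 n bar ∪ ⋃ i : Fin n, Pm n bar i

/-- The set `G` of seven extra binomials. -/
def GG (n : ℕ) : Set (MPoly n) :=
  { X (vB false 3 (Fin.last n)) * X vl * X vb + X vl * X vc,
    X (vB false 3 (Fin.last n)) * X vl * X vbb + X vl * X vcb,
    X (vC false 3 (Fin.last n)) * X (vF false (Fin.last n)) + X vl,
    X (vC true 3 (Fin.last n)) * X (vF true (Fin.last n))
      + X (vC false 3 (Fin.last n)) * X (vS false (Fin.last n)),
    X (vB true 3 (Fin.last n)) * X (vC false 3 (Fin.last n)) * X (vS false (Fin.last n))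
      + X (vC false 3 (Fin.last n)) * X (vS false (Fin.last n)) * X vb,
    X (vB true 3 (Fin.last n)) * X (vC false 3 (Fin.last n)) * X (vS false (Fin.last n))
      + X (vC false 3 (Fin.last n)) * X (vS false (Fin.last n)) * X vbb,
    X (vC true 3 (Fin.last n)) * X (vS true (Fin.last n)) + X vs }

/-- The set `𝓕 = P ∪ P̄ ∪ G`. -/
def FF (n : ℕ) : Set (MPoly n) := PP n false ∪ PP n true ∪ GG n

/-- The set `C = {ℓ c̄^{m1} c^{m2} : m1 + m2 = e(n)}` of monomials. -/
def Cmon (n : ℕ) : Set (Mon (MVar n)) :=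
  {α | ∃ m1 m2 : ℕ, m1 + m2 = en n ∧
    α = Finsupp.single vl 1 + Finsupp.single vcb m1 + Finsupp.single vc m2}

/-- The set `D = {ℓ^j c̄^{m1} c^{m2} : j ∈ {0,1}, j + m1 + m2 ≤ e(n)}` of monomials. -/
def Dmon (n : ℕ) : Set (Mon (MVar n)) :=
  {α | ∃ j m1 m2 : ℕ, j ≤ 1 ∧ j + m1 + m2 ≤ en n ∧
    α = Finsupp.single vl j + Finsupp.single vcb m1 + Finsupp.single vc m2}

/-- An injective rank function on the variables realizing the variable ordering
(from least to greatest): `s, c, c̄, ℓ, b, b̄`; then `s_0,…,s_n`; `f_0,…,f_n`;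
`c_{10},…,c_{1n}; …; c_{40},…,c_{4n}`; `b_{10},…,b_{4n}`; `q_{10},…,q_{4n}`;
then the barred variables in the same pattern. -/
def vrank (n : ℕ) : MVar n → ℕ
  | .vs => 0
  | .vc => 1
  | .vcb => 2
  | .vl => 3
  | .vb => 4
  | .vbb => 5
  | .vS bar i => 6 + (cond bar (14 * (n+1)) 0) + (i : ℕ)
  | .vF bar i => 6 + (cond bar (14 * (n+1)) 0) + (n+1) + (i : ℕ)
  | .vC bar j i => 6 + (cond bar (14 * (n+1)) 0) + 2*(n+1) + (j : ℕ)*(n+1) + (i : ℕ)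
  | .vB bar j i => 6 + (cond bar (14 * (n+1)) 0) + 6*(n+1) + (j : ℕ)*(n+1) + (i : ℕ)
  | .vQ bar j i => 6 + (cond bar (14 * (n+1)) 0) + 10*(n+1) + (j : ℕ)*(n+1) + (i : ℕ)

/-- The lexicographic monomial order on `X`: `t ≼_lex u` iff `t = u` or the exponents differ
somewhere and at the greatest variable (w.r.t. `vrank`) where they differ, the exponent of
`t` is smaller. -/
def lexLe (n : ℕ) (t u : Mon (MVar n)) : Prop :=
  t = u ∨ ∃ x : MVar n, t x < u x ∧ ∀ y : MVar n, vrank n x < vrank n y → t y = u y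

/-- The total degree of a monomial. -/
def mdeg {σ : Type*} (t : Mon σ) : ℕ := t.sum fun _ k => k

/-- The degree lexicographic monomial order. -/
def degLexLe (n : ℕ) (t u : Mon (MVar n)) : Prop :=
  mdeg t < mdeg u ∨ (mdeg t = mdeg u ∧ lexLe n t u)

/-- Weighted degree of a monomial with respect to a weight map `w`. -/
noncomputable def wdeg {n : ℕ} (w : MVar n → ℝ) (t : Mon (MVar n)) : ℝ :=
  t.sum fun x k => (k : ℝ) * w x

/-- The weighted monomial order determined by the weight map `w`. -/
def wLe {n : ℕ} (w : MVar n → ℝ) (t u : Mon (MVar n)) : Prop := t = u ∨ wdeg w t < wdeg w u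

/-!
Every relation is a sum of two monomials, so two monomials whose sum lies in the ideal are
identified by every additive congruence on exponent vectors that identifies the two sides of each
relation. It is enough to find an observation of monomials such that replacing one side of a
relation by the other is never observable, and that tells `α` from every other `γ`.

A monomial in the variables `V_0, …, V_n` is read as a tower of counters. The factors `b_{im}` are
units stored in counter `i` of level `m`, and the factor `c_{im}` selects the counter to which the
value of a token is added: `0` for the token `f_m` and `e(m)` for the token `s_m`. Once its
counters satisfy a loop invariant, level `m` hands on a token with a value between `0` and
`e(m)^2 = e(m + 1)`, so that `e(m + 1)` can in turn be the value of `s_{m + 1}`. No relation of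
`P` changes the resulting register of level `n`.

The variables `c` and `c̄` become a unit of counter 4 of level `n` carrying a label. These labels
are observed as long as that counter stays below `e(n)`, whereas the monomials with `c_{4n} s_n`,
which bring it to `e(n)`, are not observable and can be identified as `G` requires.
-/

section SyntacticCongruence

/-- The syntactic congruence of `g`: `a ~ b` when `g` cannot tell `u + a` from `u + b` in any
context `u`. It is the coarsest additive congruence on whose classes `g` is constant. -/
def syntacticAddCon {M β : Type*} [AddCommMonoid M] (g : M → β) : AddCon M where
  r a b := ∀ u, g (u + a) = g (u + b)
  iseqv := ⟨fun _ _ => rfl, fun h u => (h u).symm, fun h h' u => (h u).trans (h' u)⟩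
  add' {a b c d} hab hcd u := by
    rw [← add_assoc, hcd, add_right_comm, hab, add_right_comm, add_assoc]

theorem rel_of_monomial_sub_monomial_mem_span {σ R : Type*} [CommRing R] [Nontrivial R]
    (r : AddCon (σ →₀ ℕ)) {F : Set (MvPolynomial σ R)}
    (hF : ∀ p ∈ F, ∃ a b, r a b ∧ p = monomial a 1 - monomial b 1) {a b : σ →₀ ℕ}
    (hab : (monomial a 1 - monomial b 1 : MvPolynomial σ R) ∈ Ideal.span F) : r a b := by
  let Φ : MvPolynomial σ R →+* AddMonoidAlgebra R r.Quotient :=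
    AddMonoidAlgebra.mapDomainRingHom R r.mk'
  have Φ_monomial (a : σ →₀ ℕ) : Φ (monomial a 1) = AddMonoidAlgebra.single (r.mk' a) 1 :=
    AddMonoidAlgebra.mapDomain_single
  have span_le_ker : Ideal.span F ≤ RingHom.ker Φ := by
    refine Ideal.span_le.2 fun p hp => ?_
    obtain ⟨c, d, hcd, rfl⟩ := hF p hp
    rw [SetLike.mem_coe, RingHom.mem_ker, map_sub, Φ_monomial, Φ_monomial, sub_eq_zero]
    exact congrArg (AddMonoidAlgebra.single · 1) (r.eq.2 hcd)
  have single_eq : AddMonoidAlgebra.single (r.mk' a) (1 : R) = .single (r.mk' b) 1 := by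
    rw [← sub_eq_zero, ← Φ_monomial, ← Φ_monomial, ← map_sub]
    exact span_le_ker hab
  exact r.eq.1 (AddMonoidAlgebra.single_left_injective one_ne_zero single_eq)

end SyntacticCongruence

section Levels

/-- The variables of one level of the construction, with the level index dropped. -/
inductive LevelVar : Type
  | s
  | f
  | q (j : Fin 4)
  | c (j : Fin 4)
  | b (j : Fin 4)
deriving DecidableEq

namespace LevelVar

/-- The exponents of the monomial consisting of the variable `v` alone. -/
def unit (v : LevelVar) : LevelVar → ℕ := Pi.single v 1

@[simp]
theorem unit_apply (v w : LevelVar) : unit v w = if w = v then 1 else 0 :=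
  Pi.single_apply v 1 w

end LevelVar

open LevelVar

/-- The four counters of a level, together with the multiset of selected counters: `selector` is
the indicator function of one index while a token is present, and zero otherwise. -/
structure Register where
  selector : Fin 4 → ℕ
  counter : Fin 4 → ℕ

namespace Register

/-- The register described by the exponents `x` of the variables of one level. A token `f` has
value `0` and a token `s` has value `e`; `τ` is the number and the total value of the tokens coming
from the levels below. The value of the token is added to the counter it selects, and there is no
register (`none`) if there are several tokens or if they do not match the selectors. -/
def load (e : ℕ) (τ : ℕ × ℕ) (x : LevelVar → ℕ) : Option Register :=
  if ∑ j, x (.c j) = τ.1 + x .s + x .f ∧ τ.1 + x .s + x .f ≤ 1 then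
    some ⟨fun j => x (.c j), fun j => x (.b j) + (τ.2 + e * x .s) * x (.c j)⟩
  else none

/-- The condition under which a register passes its token on to the next level, whose variables
have exponents `y`. In the paper's indexing, the relations of `Pm` run a loop: the token `s` enters
at `q_1` with counter 1 equal to `e` and leaves as `f` at `q_4` with counter 4 equal to `e`. Every
pass through `q_2` and `q_3` moves one unit from counter 1 to counter 4 and drains counter 2, which
then holds `e`, into counter 3. -/
def Fires (e : ℕ) (y : LevelVar → ℕ) (r : Register) : Prop :=
  (∀ j, y (.q j) = r.selector j) ∧
    r.counter 0 + r.counter 3 + (r.selector 1 + r.selector 2) = e * ∑ j, r.selector j ∧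
    r.counter 1 + r.counter 2 = e * (r.selector 1 + r.selector 2)

open Classical in
/-- The number and the total value of the tokens passed on to the next level. The value is the
amount that the loop of `Fires` still has to process, so that it is `e * e` at the entry and `0` at
the exit. A register that cannot fire passes on two tokens, with which no register can be
loaded. -/
noncomputable def fire (e : ℕ) (y : LevelVar → ℕ) : Option Register → ℕ × ℕ
  | none => (2, 0)
  | some r => if r.Fires e y then (∑ j, r.selector j, e * r.counter 0 + r.counter 1) else (2, 0)

variable {e : ℕ} {τ : ℕ × ℕ} {x y : LevelVar → ℕ}

theorem load_of_two_le (h : 2 ≤ τ.1 + x .s + x .f) : load e τ x = none :=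
  if_neg (by lia)

theorem load_add_s : load e τ (x + unit .s) = load e (τ + (1, e)) x := by
  simp [load, mul_add, add_assoc, add_comm, add_left_comm]

theorem load_add_f : load e τ (x + unit .f) = load e (τ + (1, 0)) x := by
  simp [load, add_assoc, add_comm, add_left_comm]

theorem load_add_q {j : Fin 4} : load e τ (x + unit (.q j)) = load e τ x := by
  simp [load]

theorem sum_add_c {i : Fin 4} :
    ∑ j, (x + unit (.c i)) (.c j) = ∑ j, x (.c j) + 1 := by
  simp [Finset.sum_add_distrib]

theorem load_add_value_add_c {k : ℕ} {i : Fin 4} :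
    load e (τ + (0, k)) (x + unit (.c i)) =
      load e τ (x + k • unit (.b i) + unit (.c i)) := by
  unfold load
  rw [sum_add_c, sum_add_c]
  simp only [Pi.add_apply, Pi.smul_apply, unit_apply, reduceCtorEq, if_false, smul_zero,
    add_zero, Prod.fst_add, Prod.snd_add]
  refine if_ctx_congr Iff.rfl (fun h => ?_) fun _ => rfl
  have c_eq_zero (j : Fin 4) : x (.c j) = 0 :=
    (Finset.sum_eq_zero_iff.1 (by lia : ∑ j, x (.c j) = 0)) j (Finset.mem_univ j)
  congr! 3 with j
  simp only [c_eq_zero]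
  grind

theorem load_c_s {i : Fin 4} :
    load e τ (x + unit (.c i) + unit .s) =
      load e τ (x + e • unit (.b i) + unit (.c i) + unit .f) := by
  rw [load_add_s, load_add_f, ← load_add_value_add_c, add_assoc]
  simp

theorem fire_congr (h : ∀ j, x (.q j) = y (.q j)) : fire e x = fire e y := by
  funext r
  cases r with
  | none => rfl
  | some r =>
    have fires_iff : r.Fires e x ↔ r.Fires e y := by simp only [Fires, h]
    classical exact if_congr fires_iff rfl rfl

theorem fire_snd_eq_zero {r : Option Register} (h : (fire e y r).1 = 0) : (fire e y r).2 = 0 := by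
  unfold fire Fires at *
  grind [Fin.sum_univ_four]

theorem fire_load_eq_or :
    fire e y (load e τ x) = (2, 0) ∨
      ∑ j, x (.c j) = τ.1 + x .s + x .f ∧ τ.1 + x .s + x .f ≤ 1 ∧ (∀ j, y (.q j) = x (.c j)) ∧
        (fire e y (load e τ x)).1 = τ.1 + x .s + x .f := by
  by_cases h : ∑ j, x (.c j) = τ.1 + x .s + x .f ∧ τ.1 + x .s + x .f ≤ 1
  · rw [load, if_pos h, fire]
    split_ifs with h_fires
    · exact .inr ⟨h.1, h.2, h_fires.1, h.1⟩
    · exact .inl rfl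
  · rw [load, if_neg h, fire]
    exact .inl rfl

/-- No token is present and nothing is selected, neither on the current level, whose variables have
exponents `x`, nor by the variables `q` of the next level. -/
structure Idle (τ : ℕ × ℕ) (x y : LevelVar → ℕ) : Prop where
  token : τ.1 = 0
  s : x .s = 0
  f : x .f = 0
  c (j : Fin 4) : x (.c j) = 0
  q (j : Fin 4) : y (.q j) = 0

theorem idle_of_sum_c_eq_zero (hc : ∑ j, x (.c j) = 0) (hτ : τ.1 + x .s + x .f = 0)
    (hq : ∀ j, y (.q j) = x (.c j)) : Idle τ x y := by
  have c_eq_zero (j : Fin 4) : x (.c j) = 0 := Finset.sum_eq_zero_iff.1 hc j (Finset.mem_univ j)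
  exact ⟨by lia, by lia, by lia, c_eq_zero, fun j => (hq j).trans (c_eq_zero j)⟩

theorem one_le_fire_fst_of_not_idle (h : ¬ Idle τ x y) : 1 ≤ (fire e y (load e τ x)).1 := by
  obtain h_eq | ⟨hc, -, hq, h_fst⟩ := fire_load_eq_or (e := e) (τ := τ) (x := x) (y := y)
  · simp [h_eq]
  · by_contra! h_lt
    exact h (idle_of_sum_c_eq_zero (by lia) (by lia) hq)

theorem fire_load_of_idle (h : Idle τ x y) :
    fire e y (load e τ x) =
      if x (.b 0) + x (.b 3) = 0 ∧ x (.b 1) + x (.b 2) = 0 then (0, 0) else (2, 0) := by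
  have load_eq : load e τ x = some ⟨0, fun i => x (.b i)⟩ := by
    simp [load, h.token, h.s, h.f, h.c, Pi.zero_def]
  rw [load_eq]
  simp only [fire, Fires, h.q, Pi.zero_apply, Finset.sum_const_zero]
  grind

theorem fire_load_q_c_of_idle {v : ℕ} {j : Fin 4} (h : Idle τ x y) (hτ : τ.1 = 0 → τ.2 = 0) :
    fire e (y + unit (.q j)) (load e (τ + (1, v)) (x + unit (.c j))) =
      fire e (unit (.q j))
        (some ⟨Pi.single j 1, (fun i => x (.b i)) + Pi.single j v⟩) := by
  have load_eq : load e (τ + (1, v)) (x + unit (.c j)) =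
      some ⟨Pi.single j 1, (fun i => x (.b i)) + Pi.single j v⟩ := by
    rw [load, if_pos (by simp [h.token, h.s, h.f, h.c])]
    congr <;> ext i <;> simp [h.s, h.c, hτ h.token, Pi.single_apply]
  rw [load_eq, fire_congr (x := y + _) (y := unit (.q j)) (by simp [h.q])]

theorem fire_load_q_c_of_not_idle {v : ℕ} {j : Fin 4} (h : ¬ Idle τ x y) :
    fire e (y + unit (.q j)) (load e (τ + (1, v)) (x + unit (.c j))) = (2, 0) := by
  refine fire_load_eq_or.resolve_right fun ⟨hc, h_le, hq, _⟩ => h ?_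
  rw [sum_add_c] at hc
  simp only [Prod.fst_add, Pi.add_apply, unit_apply, reduceCtorEq, if_false, add_zero]
    at hc h_le
  refine idle_of_sum_c_eq_zero (by lia) (by lia) fun i => ?_
  simpa using hq i

theorem idle_add_b {i : Fin 4} : Idle τ (x + unit (.b i)) y ↔ Idle τ x y := by
  constructor <;> rintro ⟨⟩ <;> constructor <;> simp_all

theorem add_unit_b_apply {i j : Fin 4} :
    (x + unit (.b i)) (.b j) = x (.b j) + if j = i then 1 else 0 := by
  simp

theorem fire_single {j : Fin 4} {K : Fin 4 → ℕ} :
    fire e (unit (.q j)) (some ⟨Pi.single j 1, K⟩) =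
      let k := if j = 1 ∨ j = 2 then 1 else 0
      if K 0 + K 3 + k = e ∧ K 1 + K 2 = e * k then (1, e * K 0 + K 1) else (2, 0) := by
  fin_cases j <;> simp [fire, Fires, Pi.single_apply]

open Classical in
theorem fire_load_q_c {v : ℕ} {j : Fin 4} (hτ : τ.1 = 0 → τ.2 = 0) :
    fire e (y + unit (.q j)) (load e (τ + (1, v)) (x + unit (.c j))) =
      if Idle τ x y then
        let K i := x (.b i) + if i = j then v else 0
        let k := if j = 1 ∨ j = 2 then 1 else 0
        if K 0 + K 3 + k = e ∧ K 1 + K 2 = e * k then (1, e * K 0 + K 1) else (2, 0)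
      else (2, 0) := by
  by_cases h : Idle τ x y
  · rw [fire_load_q_c_of_idle h hτ, fire_single]
    simp [h, Pi.single_apply]
  · rw [fire_load_q_c_of_not_idle h]
    simp [h]

/-- The exponents `x₁` on one level and `y₁` on the next one can be exchanged for `x₂` and `y₂`
without changing the register of the upper level, whatever tokens and exponents are around. The
upper level counts up to the square of the bound `e` of the lower one. -/
def TwoLevelEquiv (e : ℕ) (x₁ y₁ x₂ y₂ : LevelVar → ℕ) : Prop :=
  ∀ (τ : ℕ × ℕ), (τ.1 = 0 → τ.2 = 0) → ∀ x y,
    load (e * e) (fire e (y + y₁) (load e τ (x + x₁))) (y + y₁) =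
      load (e * e) (fire e (y + y₂) (load e τ (x + x₂))) (y + y₂)

theorem twoLevelEquiv_of_fire {x₁ x₂ : LevelVar → ℕ} {i j : Fin 4}
    (h : ∀ τ : ℕ × ℕ, (τ.1 = 0 → τ.2 = 0) → ∀ x y,
      fire e (y + unit (.q i)) (load e τ (x + x₁)) =
        fire e (y + unit (.q j)) (load e τ (x + x₂))) :
    TwoLevelEquiv e x₁ (unit (.q i)) x₂ (unit (.q j)) := fun τ hτ x y => by
  rw [h τ hτ, load_add_q, load_add_q]

theorem fire_load_c_s_eq_add_or {j : Fin 4} (hj : j = 0 ∨ j = 3) (hτ : τ.1 = 0 → τ.2 = 0) :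
    (2 ≤ (fire e (y + unit (.q j)) (load e (τ + (1, e)) (x + unit (.c j)))).1 ∧
        1 ≤ (fire e y (load e τ x)).1) ∨
      fire e (y + unit (.q j)) (load e (τ + (1, e)) (x + unit (.c j))) =
        fire e y (load e τ x) + (1, if j = 0 then e * e else 0) := by
  rw [fire_load_q_c hτ]
  by_cases h : Idle τ x y
  · rw [fire_load_of_idle h]
    by_cases hb : x (.b 0) + x (.b 3) = 0 ∧ x (.b 1) + x (.b 2) = 0
    · right
      obtain ⟨h0, h3⟩ := Nat.add_eq_zero_iff.1 hb.1
      obtain ⟨h1, h2⟩ := Nat.add_eq_zero_iff.1 hb.2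
      obtain rfl | rfl := hj <;> simp [h, h0, h1, h2, h3]
    · left
      obtain rfl | rfl := hj <;> grind
  · rw [if_neg h]
    exact .inl ⟨le_rfl, one_le_fire_fst_of_not_idle h⟩

theorem twoLevelEquiv_q0_c0_s :
    TwoLevelEquiv e (unit (.c 0) + unit .s) (unit (.q 0)) 0 (unit .s) := fun τ hτ x y => by
  rw [load_add_q, ← add_assoc, load_add_s, load_add_s, add_zero,
    fire_congr (x := y + unit .s) (y := y) (by simp)]
  obtain ⟨h₁, h₂⟩ | h := fire_load_c_s_eq_add_or (e := e) (x := x) (y := y) (j := 0) (.inl rfl) hτ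
  · rw [load_of_two_le (by grind), load_of_two_le (by grind [Prod.fst_add])]
  · rw [h]
    rfl

theorem twoLevelEquiv_q1_c1_s :
    TwoLevelEquiv e (unit (.c 1) + unit .s) (unit (.q 1))
      (unit (.b 0) + unit (.c 0) + unit .f) (unit (.q 0)) := by
  refine twoLevelEquiv_of_fire fun τ hτ x y => ?_
  simp only [← add_assoc, load_add_s, load_add_f]
  rw [fire_load_q_c hτ, fire_load_q_c hτ]
  classical refine if_congr idle_add_b.symm ?_ rfl
  simp only [add_unit_b_apply]
  grind

theorem twoLevelEquiv_q2_c2_f :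
    TwoLevelEquiv e (unit (.c 2) + unit .f) (unit (.q 2))
      (unit (.c 1) + unit .f) (unit (.q 1)) := by
  refine twoLevelEquiv_of_fire fun τ hτ x y => ?_
  simp only [← add_assoc, load_add_f]
  rw [fire_load_q_c hτ, fire_load_q_c hτ]
  simp

theorem twoLevelEquiv_q2_b0_c2_s :
    TwoLevelEquiv e (unit (.b 0) + unit (.c 2) + unit .s) (unit (.q 2))
      (unit (.b 3) + unit (.c 1) + unit .s) (unit (.q 1)) := by
  refine twoLevelEquiv_of_fire fun τ hτ x y => ?_
  simp only [← add_assoc, load_add_s]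
  rw [fire_load_q_c hτ, fire_load_q_c hτ]
  classical refine if_congr (idle_add_b.trans idle_add_b.symm) ?_ rfl
  simp only [add_unit_b_apply]
  grind

theorem twoLevelEquiv_q3_b3_c3_f :
    TwoLevelEquiv e (unit (.b 3) + unit (.c 3) + unit .f) (unit (.q 3))
      (unit (.c 2) + unit .s) (unit (.q 2)) := by
  refine twoLevelEquiv_of_fire fun τ hτ x y => ?_
  simp only [← add_assoc, load_add_s, load_add_f]
  rw [fire_load_q_c hτ, fire_load_q_c hτ]
  classical refine if_congr idle_add_b ?_ rfl
  simp only [add_unit_b_apply]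
  grind

theorem twoLevelEquiv_q3_c3_s :
    TwoLevelEquiv e (unit (.c 3) + unit .s) (unit (.q 3)) 0 (unit .f) := fun τ hτ x y => by
  rw [load_add_q, ← add_assoc, load_add_s, load_add_f, add_zero,
    fire_congr (x := y + unit .f) (y := y) (by simp)]
  obtain ⟨h₁, h₂⟩ | h := fire_load_c_s_eq_add_or (e := e) (x := x) (y := y) (j := 3) (.inr rfl) hτ
  · rw [load_of_two_le (by grind), load_of_two_le (by grind [Prod.fst_add])]
  · rw [h]
    rfl

theorem load_add_b {i : Fin 4} :
    load e τ (x + unit (.b i)) =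
      (load e τ x).map fun r => ⟨r.selector, r.counter + Pi.single i 1⟩ := by
  unfold load
  simp only [Pi.add_apply, unit_apply, reduceCtorEq, if_false, add_zero]
  split_ifs
  · congr
    ext j
    simp [Pi.single_apply, add_right_comm]
  · rfl

theorem fire_load_b1_b2 :
    fire e y (load e τ (x + unit (.b 1))) = (2, 0) ∧
        fire e y (load e τ (x + unit (.b 2))) = (2, 0) ∨
      fire e y (load e τ (x + unit (.b 1))) =
        fire e y (load e τ (x + unit (.b 2))) + (0, 1) := by
  rw [load_add_b, load_add_b]
  cases load e τ x with
  | none => exact .inl ⟨rfl, rfl⟩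
  | some r =>
    have fires_iff : Fires e y ⟨r.selector, r.counter + Pi.single 1 1⟩ ↔
        Fires e y ⟨r.selector, r.counter + Pi.single 2 1⟩ := by
      simp [Fires, add_right_comm, ← add_assoc]
    rw [Option.map_some, Option.map_some, fire, fire]
    by_cases h : Fires e y ⟨r.selector, r.counter + Pi.single 2 1⟩
    · rw [if_pos h, if_pos (fires_iff.2 h)]
      simp [add_assoc]
    · rw [if_neg h, if_neg (mt fires_iff.1 h)]
      simp

theorem twoLevelEquiv_b2_b_c {i : Fin 4} :
    TwoLevelEquiv e (unit (.b 2) + unit .f) (unit (.q 1) + unit (.b i) + unit (.c i))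
      (unit (.b 1) + unit .f) (unit (.q 1) + unit (.c i)) := fun τ _ x y => by
  simp only [← add_assoc, load_add_f]
  rw [fire_congr (x := y + unit (.q 1) + unit (.b i) + unit (.c i)) (y := y + unit (.q 1))
    (by simp), fire_congr (x := y + unit (.q 1) + unit (.c i)) (y := y + unit (.q 1)) (by simp)]
  obtain ⟨h1, h2⟩ | h :=
    fire_load_b1_b2 (e := e) (τ := τ + (1, 0)) (x := x) (y := y + unit (.q 1))
  · rw [h1, h2, load_of_two_le (by grind), load_of_two_le (by grind)]
  · rw [h, load_add_value_add_c, one_smul]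

end Register

/-- The exponents of the unbarred variables, level by level. -/
abbrev Config := ℕ → LevelVar → ℕ

namespace Config

open Register

/-- The number and the total value of the tokens that level `m` receives from the levels below. -/
noncomputable def carry (t : Config) : ℕ → ℕ × ℕ
  | 0 => 0
  | m + 1 => fire (en m) (t (m + 1)) (load (en m) (carry t m) (t m))

/-- The register of level `m`. -/
noncomputable def state (t : Config) (m : ℕ) : Option Register :=
  load (en m) (t.carry m) (t m)

variable {t t' : Config} {m n : ℕ}

theorem carry_snd_eq_zero (h : (t.carry m).1 = 0) : (t.carry m).2 = 0 := by
  cases m with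
  | zero => rfl
  | succ m => exact fire_snd_eq_zero h

theorem carry_congr (h_below : ∀ k < m, t k = t' k) (h_q : ∀ j, t m (.q j) = t' m (.q j)) :
    t.carry m = t'.carry m := by
  induction m with
  | zero => rfl
  | succ m ih =>
    have t_eq : t m = t' m := h_below m m.lt_succ_self
    rw [carry, carry, ih (fun k hk => h_below k (by lia)) (by simp [t_eq]), t_eq, fire_congr h_q]

theorem state_congr_of_le (hmn : m ≤ n) (h : t.state m = t'.state m)
    (h_above : ∀ k > m, t k = t' k) : t.state n = t'.state n := by
  induction n, hmn using Nat.le_induction with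
  | base => exact h
  | succ n hmn ih =>
    unfold state at ih ⊢
    rw [carry, carry, ih, h_above (n + 1) (by lia)]

theorem state_add_single_zero {x₁ x₂ : LevelVar → ℕ}
    (h : ∀ x, load (en 0) 0 (x + x₁) = load (en 0) 0 (x + x₂)) :
    (t + Pi.single 0 x₁).state n = (t + Pi.single 0 x₂).state n := by
  refine state_congr_of_le n.zero_le ?_ fun k hk => ?_
  · simpa [state, carry] using h (t 0)
  · simp [Pi.single_eq_of_ne hk.ne']

theorem en_succ : en (m + 1) = en m * en m := by
  rw [en, en, pow_succ, pow_mul, pow_two]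

theorem state_add_twoLevels {x₁ y₁ x₂ y₂ : LevelVar → ℕ} (h : TwoLevelEquiv (en m) x₁ y₁ x₂ y₂)
    (hx₁ : ∀ j, x₁ (.q j) = 0) (hx₂ : ∀ j, x₂ (.q j) = 0) (hmn : m < n) :
    (t + (Pi.single m x₁ + Pi.single (m + 1) y₁)).state n =
      (t + (Pi.single m x₂ + Pi.single (m + 1) y₂)).state n := by
  have carry_eq {x y : LevelVar → ℕ} (hx : ∀ j, x (.q j) = 0) :
      (t + (Pi.single m x + Pi.single (m + 1) y)).carry m = t.carry m :=
    carry_congr (fun k hk => by simp [hk.ne, (hk.trans m.lt_succ_self).ne])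
      fun j => by simp [hx]
  refine state_congr_of_le hmn ?_ fun k hk => ?_
  · have h_eq := h (t.carry m) carry_snd_eq_zero (t m) (t (m + 1))
    unfold state
    rw [carry, carry, carry_eq hx₁, carry_eq hx₂, en_succ]
    simpa [Pi.single_apply] using h_eq
  · simp [hk.ne', (m.lt_succ_self.trans hk).ne']

theorem carry_zero : carry 0 m = 0 := by
  induction m with
  | zero => rfl
  | succ m ih =>
    rw [carry, ih]
    simp [fire, load, Fires]

theorem state_single {x : LevelVar → ℕ} (hx : ∀ j, x (.q j) = 0) :
    state (Pi.single n x) n = load (en n) 0 x := by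
  have carry_eq : carry (Pi.single n x) n = 0 :=
    (carry_congr (fun k hk => Pi.single_eq_of_ne hk.ne _) fun j => by simp [hx]).trans carry_zero
  rw [state, carry_eq, Pi.single_eq_same]

end Config

end Levels

section Observation

open MVar LevelVar Register Config Finsupp

variable {n : ℕ} {a b : Mon (MVar n)}

/-- The unbarred variables of the levels are kept, and the exponents of `b` and `b̄` are recorded in
the second component. The relations of `GG` lead to `ℓ ↦ c_{4n} f_n`, `c ↦ b_{4n} b` and
`c̄ ↦ b_{4n} b̄`. The remaining variables become `f_n ^ 2`, with which no register of level `n` can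
be loaded. -/
noncomputable def substVar (n : ℕ) : MVar n → Config × ℕ × ℕ
  | .vl => (Pi.single n (unit (.c 3) + unit .f), 0)
  | .vb => (0, 1, 0)
  | .vbb => (0, 0, 1)
  | .vc => (Pi.single n (unit (.b 3)), 1, 0)
  | .vcb => (Pi.single n (unit (.b 3)), 0, 1)
  | .vS false i => (Pi.single (i : ℕ) (unit .s), 0)
  | .vF false i => (Pi.single (i : ℕ) (unit .f), 0)
  | .vQ false j i => (Pi.single (i : ℕ) (unit (.q j)), 0)
  | .vC false j i => (Pi.single (i : ℕ) (unit (.c j)), 0)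
  | .vB false j i => (Pi.single (i : ℕ) (unit (.b j)), 0)
  | .vs | .vS true _ | .vF true _ | .vQ true _ _ | .vC true _ _ | .vB true _ _ =>
    (Pi.single n (2 • unit .f), 0)

/-- The additive extension of `substVar` to monomials. -/
noncomputable def subst (n : ℕ) : Mon (MVar n) →+ Config × ℕ × ℕ :=
  Finsupp.liftAddHom fun x => multiplesHom _ (substVar n x)

theorem subst_single (x : MVar n) (k : ℕ) : subst n (single x k) = k • substVar n x := by
  simp [subst]

/-- The exponents of `b` and `b̄` are visible as long as level `n` has a register whose last counter
is below its bound. -/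
noncomputable def observe (n : ℕ) (p : Config × ℕ × ℕ) : Option (ℕ × ℕ) :=
  (p.1.state n).bind fun r => if r.counter 3 < en n then some p.2 else none

theorem observe_eq_none_of_two_le_f {p : Config × ℕ × ℕ} (h : 2 ≤ p.1 n .f) :
    observe n p = none := by
  rw [observe, state, load_of_two_le (by lia), Option.bind_none]

theorem observe_eq_none_of_c_of_s {p : Config × ℕ × ℕ} (hc : 1 ≤ p.1 n (.c 3))
    (hs : 1 ≤ p.1 n .s) : observe n p = none := by
  rw [observe, state, load]
  split_ifs
  · refine if_neg (not_lt.2 (le_add_left ?_))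
    calc en n = en n * 1 * 1 := by simp
      _ ≤ ((p.1.carry n).2 + en n * p.1 n .s) * p.1 n (.c 3) := by
          gcongr
          exact le_add_left (by gcongr)
  · rfl

/-- Two monomials are related if replacing one by the other as a factor is not observable. -/
noncomputable abbrev observationCon (n : ℕ) : AddCon (Mon (MVar n)) :=
  syntacticAddCon (observe n ∘ subst n)

theorem observationCon_of_subst_eq (h : subst n a = subst n b) : observationCon n a b :=
  fun u => by simp [h]

theorem observationCon_of_state {x₁ x₂ : Config} (ha : subst n a = (x₁, 0))
    (hb : subst n b = (x₂, 0)) (h : ∀ t : Config, (t + x₁).state n = (t + x₂).state n) :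
    observationCon n a b :=
  fun u => by simp [ha, hb, observe, h]

theorem observationCon_of_twoLevelEquiv {x₁ y₁ x₂ y₂ : LevelVar → ℕ} {i : Fin n}
    (h : TwoLevelEquiv (en i) x₁ y₁ x₂ y₂) (hx₁ : ∀ j, x₁ (.q j) = 0) (hx₂ : ∀ j, x₂ (.q j) = 0)
    (ha : subst n a = (Pi.single (i : ℕ) x₁ + Pi.single (i + 1 : ℕ) y₁, 0))
    (hb : subst n b = (Pi.single (i : ℕ) x₂ + Pi.single (i + 1 : ℕ) y₂, 0)) :
    observationCon n a b :=
  observationCon_of_state ha hb fun _ => state_add_twoLevels h hx₁ hx₂ i.2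

/-- A monomial none of whose multiples is observable. -/
def IsDead (n : ℕ) (a : Mon (MVar n)) : Prop :=
  ∀ u, observe n (subst n (u + a)) = none

theorem isDead_of_two_le_f (h : 2 ≤ (subst n a).1 n .f) : IsDead n a := fun u =>
  observe_eq_none_of_two_le_f (h.trans (by simp))

theorem isDead_of_c_of_s (hc : 1 ≤ (subst n a).1 n (.c 3)) (hs : 1 ≤ (subst n a).1 n .s) :
    IsDead n a := fun u =>
  observe_eq_none_of_c_of_s (hc.trans (by simp)) (hs.trans (by simp))

theorem IsDead.observationCon (ha : IsDead n a) (hb : IsDead n b) : observationCon n a b :=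
  fun u => (ha u).trans (hb u).symm

/-- The binomials over `ZMod 2` whose two monomials are related by `observationCon`. -/
def observationBinomials (n : ℕ) : Set (MPoly n) :=
  {p | ∃ a b, observationCon n a b ∧ p = monomial a 1 - monomial b 1}

theorem monomial_add_monomial_mem_observationBinomials (h : observationCon n a b) :
    monomial a 1 + monomial b 1 ∈ observationBinomials n :=
  ⟨a, b, h, (CharTwo.sub_eq_add _ _).symm⟩

theorem P0_false_subset : P0 n false ⊆ observationBinomials n := by
  rintro _ ⟨j, rfl⟩
  simp only [X, monomial_mul, monomial_pow, mul_one, one_pow]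
  refine monomial_add_monomial_mem_observationBinomials (observationCon_of_state
    (x₁ := Pi.single 0 (en 0 • unit (.b j) + unit (.c j) + unit .f))
    (x₂ := Pi.single 0 (unit (.c j) + unit .s)) ?_ ?_ fun t => state_add_single_zero fun x => ?_)
  · simp [subst_single, substVar, Pi.single_add, Pi.single_smul, en, -nsmul_eq_mul, -smul_eq_mul]
  · simp [subst_single, substVar, Pi.single_add]
  · simpa only [← add_assoc] using load_c_s.symm

theorem Pm_false_subset (i : Fin n) : Pm n false i ⊆ observationBinomials n := by
  rintro _ ((rfl | rfl | rfl | rfl | rfl | rfl) | ⟨j, rfl⟩) <;>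
    simp only [X, monomial_mul, mul_one] <;>
    refine monomial_add_monomial_mem_observationBinomials ?_
  · apply observationCon_of_twoLevelEquiv (i := i) twoLevelEquiv_q0_c0_s <;>
      simp [subst_single, substVar, Pi.single_add, add_comm, add_left_comm]
  · apply observationCon_of_twoLevelEquiv (i := i) twoLevelEquiv_q1_c1_s <;>
      simp [subst_single, substVar, Pi.single_add, add_comm, add_left_comm]
  · apply observationCon_of_twoLevelEquiv (i := i) twoLevelEquiv_q2_c2_f <;>
      simp [subst_single, substVar, Pi.single_add, add_comm, add_left_comm]
  · apply observationCon_of_twoLevelEquiv (i := i) twoLevelEquiv_q2_b0_c2_s <;>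
      simp [subst_single, substVar, Pi.single_add, add_comm, add_left_comm]
  · apply observationCon_of_twoLevelEquiv (i := i) twoLevelEquiv_q3_b3_c3_f <;>
      simp [subst_single, substVar, Pi.single_add, add_comm, add_left_comm]
  · apply observationCon_of_twoLevelEquiv (i := i) twoLevelEquiv_q3_c3_s <;>
      simp [subst_single, substVar, Pi.single_add, add_comm, add_left_comm]
  · apply observationCon_of_twoLevelEquiv (i := i) (twoLevelEquiv_b2_b_c (i := j)) <;>
      simp [subst_single, substVar, Pi.single_add, add_comm, add_left_comm]

theorem PP_true_subset : PP n true ⊆ observationBinomials n := by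
  rintro _ (⟨j, rfl⟩ | h)
  · simp only [X, monomial_mul, monomial_pow, mul_one, one_pow]
    refine monomial_add_monomial_mem_observationBinomials (IsDead.observationCon ?_ ?_) <;>
      exact isDead_of_two_le_f (by simp [subst_single, substVar])
  · obtain ⟨i, (rfl | rfl | rfl | rfl | rfl | rfl) | ⟨j, rfl⟩⟩ := Set.mem_iUnion.1 h <;>
      simp only [X, monomial_mul, mul_one] <;>
      refine monomial_add_monomial_mem_observationBinomials (IsDead.observationCon ?_ ?_) <;>
      exact isDead_of_two_le_f (by simp [subst_single, substVar])

theorem GG_subset : GG n ⊆ observationBinomials n := by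
  rintro _ (rfl | rfl | rfl | rfl | rfl | rfl | rfl) <;>
    simp only [X, monomial_mul, mul_one] <;>
    refine monomial_add_monomial_mem_observationBinomials ?_
  · exact observationCon_of_subst_eq (by simp [subst_single, substVar, add_comm])
  · exact observationCon_of_subst_eq (by simp [subst_single, substVar, add_comm])
  · exact observationCon_of_subst_eq (by simp [subst_single, substVar, Pi.single_add])
  · refine IsDead.observationCon (isDead_of_two_le_f ?_) (isDead_of_c_of_s ?_ ?_) <;>
      simp [subst_single, substVar]
  · refine IsDead.observationCon (isDead_of_c_of_s ?_ ?_) (isDead_of_c_of_s ?_ ?_) <;>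
      simp [subst_single, substVar]
  · refine IsDead.observationCon (isDead_of_c_of_s ?_ ?_) (isDead_of_c_of_s ?_ ?_) <;>
      simp [subst_single, substVar]
  · refine IsDead.observationCon (isDead_of_two_le_f ?_) (isDead_of_two_le_f ?_) <;>
      simp [subst_single, substVar]

theorem FF_subset : FF n ⊆ observationBinomials n :=
  Set.union_subset (Set.union_subset (Set.union_subset P0_false_subset
    (Set.iUnion_subset Pm_false_subset)) PP_true_subset) GG_subset

theorem observe_subst_of_add_mem_span (h : (monomial a 1 + monomial b 1 : MPoly n) ∈
    Ideal.span (FF n)) : observe n (subst n a) = observe n (subst n b) := by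
  rw [← CharTwo.sub_eq_add] at h
  simpa using rel_of_monomial_sub_monomial_mem_span (observationCon n) FF_subset h 0

theorem subst_l_c_cb (k l : ℕ) :
    subst n (single vl 1 + single vc k + single vcb l) =
      (Pi.single n (unit (.c 3) + unit .f + (k + l) • unit (.b 3)), k, l) := by
  simp [subst_single, substVar, Pi.single_add, Pi.single_smul, add_smul, add_assoc,
    -nsmul_eq_mul, -smul_eq_mul]

theorem observe_subst_l_c_cb (k l : ℕ) :
    observe n (subst n (single vl 1 + single vc k + single vcb l)) =
      if k + l < en n then some (k, l) else none := by
  rw [subst_l_c_cb, observe, state_single (by simp)]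
  simp [load]

end Observation

open MVar in
/-- For `α = ℓ c̄^{m1} c^{m2} ∈ D` (so `1 + m1 + m2 ≤ 2^(2^n)`): if
`γ = ℓ c^{r1} c̄^{r2}` and `α + γ ∈ ⟨𝓕⟩` then `γ = α`. -/
theorem stmt13 (n : ℕ) (m1 m2 : ℕ) (h : 1 + m1 + m2 ≤ en n) (r1 r2 : ℕ)
    (hγ : (X vl * X vcb ^ m1 * X vc ^ m2 + X vl * X vc ^ r1 * X vcb ^ r2 : MPoly n)
      ∈ Ideal.span (FF n)) :
    (X vl * X vc ^ r1 * X vcb ^ r2 : MPoly n) = X vl * X vcb ^ m1 * X vc ^ m2 := by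
  have monomial_eq (k l : ℕ) : (X vl * X vc ^ k * X vcb ^ l : MPoly n) =
      monomial (Finsupp.single vl 1 + Finsupp.single vc k + Finsupp.single vcb l) 1 := by
    simp [X, monomial_mul, monomial_pow]
  rw [mul_right_comm, monomial_eq, monomial_eq] at hγ
  have observe_eq := observe_subst_of_add_mem_span hγ
  rw [observe_subst_l_c_cb, observe_subst_l_c_cb, if_pos (by lia)] at observe_eq
  obtain ⟨rfl, rfl⟩ : m2 = r1 ∧ m1 = r2 := by
    split_ifs at observe_eq
    simpa using observe_eq
  exact mul_right_comm _ _ _
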